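/- Let Ã be a symmetric N×N real matrix, W an H×H real matrix, V an F×H real matrix, and X an N×F real matrix, and suppose K = ρ(Ã) · ‖W‖₂ < 1. Let H* be the unique fixed point of the reservoir map Φ(M) = tanh(Ã M W + X V). Then for every initial condition H₀ ∈ ℝ^{N×H}, the iterates defined by H_{t+1} = Φ(H_t) converge to H* as t → ∞ (in the Frobenius norm); in particular the limit is independent of the initial condition. -/

import Mathlib

noncomputable def frobNorm {m n : Type*} [Fintype m] [Fintype n]
    (M : Matrix m n ℝ) : ℝ :=
  Real.sqrt (∑ i, ∑ j, (M i j) ^ 2)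

noncomputable def specNorm {m n : ℕ} (M : Matrix (Fin m) (Fin n) ℝ) : ℝ :=
  ‖LinearMap.toContinuousLinearMap (Matrix.toEuclideanLin M)‖

noncomputable def specRad {n : ℕ} (A : Matrix (Fin n) (Fin n) ℝ)
    (hA : A.IsHermitian) : ℝ :=
  ⨆ i, |hA.eigenvalues i|

noncomputable def mtanh {m n : Type*} (M : Matrix m n ℝ) : Matrix m n ℝ :=
  Matrix.of fun i j => Real.tanh (M i j)

noncomputable def resMap {N F Hd : ℕ} (Atil : Matrix (Fin N) (Fin N) ℝ)
    (W : Matrix (Fin Hd) (Fin Hd) ℝ) (V : Matrix (Fin F) (Fin Hd) ℝ)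
    (X : Matrix (Fin N) (Fin F) ℝ) (M : Matrix (Fin N) (Fin Hd) ℝ) :
    Matrix (Fin N) (Fin Hd) ℝ :=
  mtanh (Atil * M * W + X * V)

/-!
In the Frobenius norm, multiplication by a matrix on either side is Lipschitz with constant the
spectral norm of that matrix, and applying a `c`-Lipschitz function entrywise is `c`-Lipschitz.
Hence `M ↦ σ(A M W + B)` is Lipschitz with constant `c ‖A‖₂ ‖W‖₂`, and Banach's fixed point theorem
applies as soon as this is less than one. For the reservoir map, `tanh` is `1`-Lipschitz because its
derivative is `1 / cosh ^ 2 ≤ 1`, and `‖Ã‖₂ = ρ(Ã)` by the spectral theorem.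
-/

theorem hasDerivAt_tanh (x : ℝ) : HasDerivAt Real.tanh (1 / Real.cosh x ^ 2) x := by
  have hquot := (Real.hasDerivAt_sinh x).fun_div (Real.hasDerivAt_cosh x) (Real.cosh_pos x).ne'
  rw [← sq, ← sq, Real.cosh_sq_sub_sinh_sq] at hquot
  simpa only [← Real.tanh_eq_sinh_div_cosh] using hquot

theorem lipschitzWith_one_tanh : LipschitzWith 1 Real.tanh := by
  have hdiff : Differentiable ℝ Real.tanh := fun x => (hasDerivAt_tanh x).differentiableAt
  refine lipschitzWith_of_nnnorm_deriv_le hdiff fun x => ?_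
  rw [(hasDerivAt_tanh x).deriv, ← NNReal.coe_le_coe, coe_nnnorm, NNReal.coe_one,
    Real.norm_of_nonneg (by positivity)]
  exact div_le_one_of_le₀ (one_le_pow₀ (Real.one_le_cosh x)) (by positivity)

theorem pi_norm_eq_iSup_norm {ι E : Type*} [Fintype ι] [SeminormedAddCommGroup E] (f : ι → E) :
    ‖f‖ = ⨆ i, ‖f i‖ := by
  apply le_antisymm
  · rw [pi_norm_le_iff_of_nonneg (Real.iSup_nonneg fun i => norm_nonneg (f i))]
    exact le_ciSup (Set.finite_range fun i => ‖f i‖).bddAbove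
  · exact Real.iSup_le (norm_le_pi_norm f) (norm_nonneg f)

section SpectralNorm

open scoped Matrix.Norms.L2Operator

theorem l2_opNorm_eq_norm_eigenvalues {𝕜 n : Type*} [RCLike 𝕜] [Fintype n] [DecidableEq n]
    {A : Matrix n n 𝕜} (hA : A.IsHermitian) : ‖A‖ = ‖hA.eigenvalues‖ := by
  calc ‖A‖ = ‖Matrix.diagonal (RCLike.ofReal ∘ hA.eigenvalues : n → 𝕜)‖ := by
        conv_lhs => rw [hA.spectral_theorem, Unitary.conjStarAlgAut_apply, ← Unitary.coe_star,
          CStarRing.norm_mul_coe_unitary, CStarRing.norm_coe_unitary_mul]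
    _ = ‖hA.eigenvalues‖ := by
        simp only [Matrix.l2_opNorm_diagonal, pi_norm_eq_iSup_norm, Function.comp_apply,
          RCLike.norm_ofReal, Real.norm_eq_abs]

theorem specNorm_eq_l2_opNorm {m n : ℕ} (A : Matrix (Fin m) (Fin n) ℝ) : specNorm A = ‖A‖ :=
  rfl

theorem specRad_eq_l2_opNorm {n : ℕ} {A : Matrix (Fin n) (Fin n) ℝ} (hA : A.IsHermitian) :
    specRad A hA = ‖A‖ := by
  rw [l2_opNorm_eq_norm_eigenvalues hA, pi_norm_eq_iSup_norm]
  rfl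

end SpectralNorm

section FrobeniusNorm

variable {l m n : Type*} [Fintype l] [Fintype m] [Fintype n]

theorem frobNorm_nonneg (M : Matrix m n ℝ) : 0 ≤ frobNorm M :=
  Real.sqrt_nonneg _

theorem frobNorm_sq (M : Matrix m n ℝ) : frobNorm M ^ 2 = ∑ i, ∑ j, M i j ^ 2 :=
  Real.sq_sqrt (by positivity)

theorem frobNorm_transpose (M : Matrix m n ℝ) : frobNorm M.transpose = frobNorm M :=
  congrArg Real.sqrt Finset.sum_comm

theorem frobNorm_sq_eq_sum_norm_col_sq (M : Matrix m n ℝ) :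
    frobNorm M ^ 2 = ∑ j, ‖WithLp.toLp 2 (M.col j)‖ ^ 2 := by
  rw [frobNorm_sq, Finset.sum_comm]
  simp only [EuclideanSpace.real_norm_sq_eq, Matrix.col_apply]

open scoped Matrix.Norms.L2Operator in
theorem frobNorm_mul_le_l2_opNorm_mul [DecidableEq m] (A : Matrix l m ℝ) (M : Matrix m n ℝ) :
    frobNorm (A * M) ≤ ‖A‖ * frobNorm M := by
  have hcol (j : n) :
      ‖WithLp.toLp 2 ((A * M).col j)‖ ≤ ‖A‖ * ‖WithLp.toLp 2 (M.col j)‖ :=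
    A.l2_opNorm_mulVec (WithLp.toLp 2 (M.col j))
  refine le_of_sq_le_sq ?_ (mul_nonneg (norm_nonneg A) (frobNorm_nonneg M))
  calc frobNorm (A * M) ^ 2 = ∑ j, ‖WithLp.toLp 2 ((A * M).col j)‖ ^ 2 :=
        frobNorm_sq_eq_sum_norm_col_sq _
    _ ≤ ∑ j, (‖A‖ * ‖WithLp.toLp 2 (M.col j)‖) ^ 2 := by
        gcongr with j
        exact hcol j
    _ = (‖A‖ * frobNorm M) ^ 2 := by
        simp only [mul_pow, frobNorm_sq_eq_sum_norm_col_sq, Finset.mul_sum]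

open scoped Matrix.Norms.L2Operator in
theorem frobNorm_mul_le_mul_l2_opNorm [DecidableEq n] (M : Matrix l m ℝ)
    (W : Matrix m n ℝ) : frobNorm (M * W) ≤ frobNorm M * ‖W‖ := by
  classical
  rw [← frobNorm_transpose, Matrix.transpose_mul, ← frobNorm_transpose M, mul_comm,
    ← Matrix.l2_opNorm_conjTranspose, Matrix.conjTranspose_eq_transpose_of_trivial]
  exact frobNorm_mul_le_l2_opNorm_mul _ _

theorem frobNorm_map_sub_map_le {σ : ℝ → ℝ} {c : NNReal} (hσ : LipschitzWith c σ)
    (P Q : Matrix m n ℝ) : frobNorm (P.map σ - Q.map σ) ≤ c * frobNorm (P - Q) := by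
  refine le_of_sq_le_sq ?_ (mul_nonneg c.coe_nonneg (frobNorm_nonneg _))
  simp only [mul_pow, frobNorm_sq, Finset.mul_sum, Matrix.sub_apply, Matrix.map_apply]
  gcongr ∑ i, ∑ j, ?_ with i _ j
  rw [← mul_pow, sq_le_sq, abs_mul, NNReal.abs_eq]
  exact hσ.dist_le_mul (P i j) (Q i j)

open scoped Matrix.Norms.Frobenius in
theorem frobNorm_eq_norm (M : Matrix m n ℝ) : frobNorm M = ‖M‖ := by
  rw [Matrix.frobenius_norm_def, ← Real.sqrt_eq_rpow]
  simp only [frobNorm, Real.rpow_two, Real.norm_eq_abs, sq_abs]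

open scoped Matrix.Norms.Frobenius in
theorem tendsto_frobNorm_iterate_sub {f : Matrix m n ℝ → Matrix m n ℝ} {K : ℝ} (hK : K < 1)
    (hf : ∀ P Q, frobNorm (f P - f Q) ≤ K * frobNorm (P - Q)) {P : Matrix m n ℝ}
    (hP : Function.IsFixedPt f P) (M : Matrix m n ℝ) :
    Filter.Tendsto (fun t : ℕ => frobNorm (f^[t] M - P)) Filter.atTop (nhds 0) := by
  simp only [frobNorm_eq_norm, ← dist_eq_norm] at hf ⊢
  have : CompleteSpace (Matrix m n ℝ) := FiniteDimensional.complete ℝ _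
  have hcontr : ContractingWith K.toNNReal f :=
    ⟨Real.toNNReal_lt_one.2 hK, LipschitzWith.of_dist_le' hf⟩
  rw [← tendsto_iff_dist_tendsto_zero, hcontr.fixedPoint_unique hP]
  exact hcontr.tendsto_iterate_fixedPoint M

end FrobeniusNorm

section Reservoir

open scoped Matrix.Norms.L2Operator

variable {m n : Type*} [Fintype m] [Fintype n] [DecidableEq m] [DecidableEq n]

/-- The reservoir map with an arbitrary activation function `σ`, applied entrywise, and with input
term `B`; the reservoir map `Φ` is the case `σ = tanh` and `B = X V`. -/
def reservoirMap (σ : ℝ → ℝ) (A : Matrix m m ℝ) (W : Matrix n n ℝ) (B M : Matrix m n ℝ) :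
    Matrix m n ℝ :=
  (A * M * W + B).map σ

theorem resMap_eq_reservoirMap {N F Hd : ℕ} (A : Matrix (Fin N) (Fin N) ℝ)
    (W : Matrix (Fin Hd) (Fin Hd) ℝ) (V : Matrix (Fin F) (Fin Hd) ℝ)
    (X : Matrix (Fin N) (Fin F) ℝ) : resMap A W V X = reservoirMap Real.tanh A W (X * V) :=
  rfl

theorem frobNorm_reservoirMap_sub_le {σ : ℝ → ℝ} {c : NNReal} (hσ : LipschitzWith c σ)
    (A : Matrix m m ℝ) (W : Matrix n n ℝ) (B P Q : Matrix m n ℝ) :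
    frobNorm (reservoirMap σ A W B P - reservoirMap σ A W B Q) ≤
      c * (‖A‖ * ‖W‖) * frobNorm (P - Q) := by
  calc frobNorm (reservoirMap σ A W B P - reservoirMap σ A W B Q)
      ≤ c * frobNorm (A * P * W + B - (A * Q * W + B)) := frobNorm_map_sub_map_le hσ _ _
    _ = c * frobNorm (A * (P - Q) * W) := by
        rw [add_sub_add_right_eq_sub, Matrix.mul_sub, Matrix.sub_mul]
    _ ≤ c * (‖A‖ * frobNorm (P - Q) * ‖W‖) := by
        grw [frobNorm_mul_le_mul_l2_opNorm, frobNorm_mul_le_l2_opNorm_mul]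
    _ = c * (‖A‖ * ‖W‖) * frobNorm (P - Q) := by ring

theorem reservoir_iterates_tendsto_fixedPoint_general {σ : ℝ → ℝ} {c : NNReal}
    (hσ : LipschitzWith c σ) {A : Matrix m m ℝ} {W : Matrix n n ℝ} {B : Matrix m n ℝ}
    (hK : c * (‖A‖ * ‖W‖) < 1) {Hstar : Matrix m n ℝ}
    (hfix : Function.IsFixedPt (reservoirMap σ A W B) Hstar) (H0 : Matrix m n ℝ) :
    Filter.Tendsto (fun t : ℕ => frobNorm ((reservoirMap σ A W B)^[t] H0 - Hstar))
      Filter.atTop (nhds 0) :=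
  tendsto_frobNorm_iterate_sub hK (frobNorm_reservoirMap_sub_le hσ A W B) hfix H0

end Reservoir

/-- Under K = ρ(Ã)·‖W‖₂ < 1, the iterates converge (in Frobenius norm) to the
unique fixed point from every initial condition. -/
theorem reservoir_iterates_tendsto_fixedPoint {N F Hd : ℕ}
    (Atil : Matrix (Fin N) (Fin N) ℝ) (hA : Atil.IsHermitian)
    (W : Matrix (Fin Hd) (Fin Hd) ℝ) (V : Matrix (Fin F) (Fin Hd) ℝ)
    (X : Matrix (Fin N) (Fin F) ℝ)
    (hK : specRad Atil hA * specNorm W < 1)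
    (Hstar : Matrix (Fin N) (Fin Hd) ℝ)
    (hfix : resMap Atil W V X Hstar = Hstar) :
    ∀ H0 : Matrix (Fin N) (Fin Hd) ℝ,
      Filter.Tendsto (fun t : ℕ => frobNorm ((resMap Atil W V X)^[t] H0 - Hstar))
        Filter.atTop (nhds 0) := by
  rw [specRad_eq_l2_opNorm, specNorm_eq_l2_opNorm, ← one_mul (_ * _), ← NNReal.coe_one] at hK
  rw [resMap_eq_reservoirMap] at hfix ⊢
  exact reservoir_iterates_tendsto_fixedPoint_general lipschitzWith_one_tanh hK hfix
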